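/- For every z ∈ k^×, the formulas defining P_3(z) and P̃_3(z) endow the respective 3-dimensional k-vector spaces with H_k-module structures, and both H_k-modules P_3(z) and P̃_3(z) are simple. -/

import Mathlib

/-- The defining relations of the affine Hecke algebra of type `A_2` (for `Gl_3`),
on the free algebra on four generators `T = X 0`, `T⁻¹ = X 1`, `S_1 = X 2`, `S_2 = X 3`. -/
inductive HeckeRel (R : Type) [CommRing R] (q : R) :
    FreeAlgebra R (Fin 4) → FreeAlgebra R (Fin 4) → Prop
  | TTinv : HeckeRel R q (FreeAlgebra.ι R 0 * FreeAlgebra.ι R 1) 1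
  | TinvT : HeckeRel R q (FreeAlgebra.ι R 1 * FreeAlgebra.ι R 0) 1
  | quad : HeckeRel R q
      ((FreeAlgebra.ι R 2 + 1) * (FreeAlgebra.ι R 2 - algebraMap R (FreeAlgebra R (Fin 4)) q)) 0
  | T3S1 : HeckeRel R q (FreeAlgebra.ι R 0 ^ 3 * FreeAlgebra.ι R 2)
      (FreeAlgebra.ι R 2 * FreeAlgebra.ι R 0 ^ 3)
  | braid : HeckeRel R q (FreeAlgebra.ι R 2 * FreeAlgebra.ι R 3 * FreeAlgebra.ι R 2)
      (FreeAlgebra.ι R 3 * FreeAlgebra.ι R 2 * FreeAlgebra.ι R 3)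
  | TS2 : HeckeRel R q (FreeAlgebra.ι R 0 * FreeAlgebra.ι R 3)
      (FreeAlgebra.ι R 2 * FreeAlgebra.ι R 0)

/-- The affine Hecke algebra `H_R` with parameter `q ∈ R`. -/
abbrev HeckeAlg (R : Type) [CommRing R] (q : R) := RingQuot (HeckeRel R q)

namespace HeckeAlg

variable (R : Type) [CommRing R] (q : R)

noncomputable def gen (i : Fin 4) : HeckeAlg R q :=
  RingQuot.mkAlgHom R (HeckeRel R q) (FreeAlgebra.ι R i)

noncomputable def T : HeckeAlg R q := gen R q 0
noncomputable def Tinv : HeckeAlg R q := gen R q 1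
noncomputable def S1 : HeckeAlg R q := gen R q 2
noncomputable def S2 : HeckeAlg R q := gen R q 3

theorem T_mul_Tinv : T R q * Tinv R q = 1 := by
  simpa [T, Tinv, gen, map_mul, map_one] using
    RingQuot.mkAlgHom_rel R (HeckeRel.TTinv (R := R) (q := q))

theorem Tinv_mul_T : Tinv R q * T R q = 1 := by
  simpa [T, Tinv, gen, map_mul, map_one] using
    RingQuot.mkAlgHom_rel R (HeckeRel.TinvT (R := R) (q := q))

theorem quad_rel : (S1 R q + 1) * (S1 R q - algebraMap R (HeckeAlg R q) q) = 0 := by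
  simpa [S1, gen, map_mul, map_add, map_sub, map_one, map_zero, AlgHom.commutes] using
    RingQuot.mkAlgHom_rel R (HeckeRel.quad (R := R) (q := q))

theorem T3_mul_S1 : T R q ^ 3 * S1 R q = S1 R q * T R q ^ 3 := by
  simpa [T, S1, gen, map_mul, map_pow] using
    RingQuot.mkAlgHom_rel R (HeckeRel.T3S1 (R := R) (q := q))

theorem braid_rel : S1 R q * S2 R q * S1 R q = S2 R q * S1 R q * S2 R q := by
  simpa [S1, S2, gen, map_mul] using
    RingQuot.mkAlgHom_rel R (HeckeRel.braid (R := R) (q := q))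

theorem T_mul_S2 : T R q * S2 R q = S1 R q * T R q := by
  simpa [T, S1, S2, gen, map_mul] using
    RingQuot.mkAlgHom_rel R (HeckeRel.TS2 (R := R) (q := q))

/-- The canonical (base change) ring homomorphism `H_R → H_S` induced by a ring
homomorphism `R → S` sending the parameter `q` to the parameter `q'`. -/
noncomputable def map {R S : Type} [CommRing R] [CommRing S] (f : R →+* S) (q : R) (q' : S)
    (h : f q = q') : HeckeAlg R q →+* HeckeAlg S q' := by
  subst h
  letI : Algebra R (HeckeAlg S (f q)) :=
    RingHom.toAlgebra' ((algebraMap S (HeckeAlg S (f q))).comp f)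
      (fun c x => by simpa using Algebra.commutes (f c) x)
  refine RingQuot.lift
    ⟨((FreeAlgebra.lift R fun i => gen S (f q) i : _ →ₐ[R] HeckeAlg S (f q)) :
        FreeAlgebra R (Fin 4) →+* HeckeAlg S (f q)), ?_⟩
  have key : ∀ i : Fin 4,
      (FreeAlgebra.lift R fun j => gen S (f q) j) (FreeAlgebra.ι R i) = gen S (f q) i :=
    fun i => FreeAlgebra.lift_ι_apply _ _
  have keyq : (FreeAlgebra.lift R fun j => gen S (f q) j)
      (algebraMap R (FreeAlgebra R (Fin 4)) q) = algebraMap S (HeckeAlg S (f q)) (f q) := by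
    rw [AlgHom.commutes]
    rfl
  intro a b hab
  cases hab with
  | TTinv => simpa [key, T, Tinv] using T_mul_Tinv S (f q)
  | TinvT => simpa [key, T, Tinv] using Tinv_mul_T S (f q)
  | quad => simpa [key, keyq, S1] using quad_rel S (f q)
  | T3S1 => simpa [key, T, S1] using T3_mul_S1 S (f q)
  | braid => simpa [key, S1, S2] using braid_rel S (f q)
  | TS2 => simpa [key, T, S1, S2] using T_mul_S2 S (f q)

/-- `S_1⁻¹ = q⁻¹ (S_1 - q + 1)`, where `qi` is an inverse of `q` in `R`. -/
noncomputable def S1i (qi : R) : HeckeAlg R q :=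
  algebraMap R (HeckeAlg R q) qi * (S1 R q - algebraMap R (HeckeAlg R q) q + 1)

/-- `S_2⁻¹ = q⁻¹ (S_2 - q + 1)`, where `qi` is an inverse of `q` in `R`. -/
noncomputable def S2i (qi : R) : HeckeAlg R q :=
  algebraMap R (HeckeAlg R q) qi * (S2 R q - algebraMap R (HeckeAlg R q) q + 1)

/-- The Bernstein elements `Y_1 = q S_1⁻¹ S_2⁻¹ T`, `Y_2 = S_2⁻¹ T S_1`,
`Y_3 = q⁻¹ T S_1 S_2`, where `qi` is an inverse of `q` in `R`. -/
noncomputable def Y (qi : R) : Fin 3 → HeckeAlg R q :=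
  ![algebraMap R (HeckeAlg R q) q * S1i R q qi * S2i R q qi * T R q,
    S2i R q qi * T R q * S1 R q,
    algebraMap R (HeckeAlg R q) qi * T R q * S1 R q * S2 R q]

end HeckeAlg

noncomputable section

variable (p : ℕ) [Fact p.Prime] (k : Type) [Field k] [IsAlgClosed k] [CharP k p]

/-- `H_k = H ⊗_{ℤ[q]} k` with `q ↦ 0`. -/
abbrev Hk : Type := HeckeAlg k 0

/-- The action of `T` on a `1`-dimensional space: multiplication by `c`. -/
def Tmat1 (c : k) : Module.End k (Fin 1 → k) := Matrix.mulVecLin !![c]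

/-- The action of `T` on the `2`-dimensional space with basis `w, Tw` where
`T(Tw) = -y²w - yTw`. -/
def Tmat2 (y : k) : Module.End k (Fin 2 → k) := Matrix.mulVecLin !![0, -y^2; 1, -y]

/-- The action of `T` on the `3`-dimensional space with basis `v, Tv, T²v` where
`T(T²v) = zv`. -/
def Tmat3 (z : k) : Module.End k (Fin 3 → k) := Matrix.mulVecLin !![0, 0, z; 1, 0, 0; 0, 1, 0]

/-- The action of `T` on the `6`-dimensional space with basis `v, Tv, T²v, w, Tw, T²w`
where `T(T²v) = zv`, `T(T²w) = zw`. -/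
def Tmat6 (z : k) : Module.End k (Fin 6 → k) := Matrix.mulVecLin
  !![0, 0, z, 0, 0, 0;
     1, 0, 0, 0, 0, 0;
     0, 1, 0, 0, 0, 0;
     0, 0, 0, 0, 0, z;
     0, 0, 0, 1, 0, 0;
     0, 0, 0, 0, 1, 0]

/-- The action of `S_1` on `L_6(z,y)`: `S_1v = 0`, `S_1(Tv) = T²w`, `S_1(T²v) = -T²v`,
`S_1w = -w`, `S_1(Tw) = (y/z)T²v`, `S_1(T²w) = -T²w`. -/
def SL6 (z y : k) : Module.End k (Fin 6 → k) := Matrix.mulVecLin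
  !![0, 0, 0,  0,  0,     0;
     0, 0, 0,  0,  0,     0;
     0, 0, -1, 0,  y / z, 0;
     0, 0, 0,  -1, 0,     0;
     0, 0, 0,  0,  0,     0;
     0, 1, 0,  0,  0,     -1]

/-- The action of `S_1` on `L̃_6(z,y)`: as on `L_6(z,y)` except `S_1v = w`, `S_1(Tv) = 0`. -/
def SLt6 (z y : k) : Module.End k (Fin 6 → k) := Matrix.mulVecLin
  !![0, 0, 0,  0,  0,     0;
     0, 0, 0,  0,  0,     0;
     0, 0, -1, 0,  y / z, 0;
     1, 0, 0,  -1, 0,     0;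
     0, 0, 0,  0,  0,     0;
     0, 0, 0,  0,  0,     -1]

/-- The action of `S_1` on `K_6(z,y,y')`: `S_1v = w`, `S_1(Tv) = (y/y')T²w`,
`S_1(T²v) = -T²v`, `S_1w = -w`, `S_1(Tw) = (y'/z)T²v`, `S_1(T²w) = -T²w`. -/
def SK6 (z y y' : k) : Module.End k (Fin 6 → k) := Matrix.mulVecLin
  !![0, 0,      0,  0,  0,      0;
     0, 0,      0,  0,  0,      0;
     0, 0,      -1, 0,  y' / z, 0;
     1, 0,      0,  -1, 0,      0;
     0, 0,      0,  0,  0,      0;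
     0, y / y', 0,  0,  0,      -1]

/-- The action of `S_1` on `M_3(z,y)`: `S_1v = 0`, `S_1(Tv) = y⁻¹T²v`, `S_1(T²v) = -T²v`. -/
def SM3 (y : k) : Module.End k (Fin 3 → k) := Matrix.mulVecLin
  !![0, 0, 0; 0, 0, 0; 0, y⁻¹, -1]

/-- The action of `S_1` on `M̃_3(z,y)`: `S_1v = -v`, `S_1(Tv) = -y⁻¹T²v`, `S_1(T²v) = -T²v`. -/
def SMt3 (y : k) : Module.End k (Fin 3 → k) := Matrix.mulVecLin
  !![-1, 0, 0; 0, 0, 0; 0, -y⁻¹, -1]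

/-- The action of `S_1` on `N_3(z,y)`: `S_1v = -v`, `S_1(Tv) = 0`, `S_1(T²v) = -yTv - T²v`. -/
def SN3 (y : k) : Module.End k (Fin 3 → k) := Matrix.mulVecLin
  !![-1, 0, 0; 0, 0, -y; 0, 0, -1]

/-- The action of `S_1` on `Ñ_3(z,y)`: `S_1v = 0`, `S_1(Tv) = 0`, `S_1(T²v) = yTv - T²v`. -/
def SNt3 (y : k) : Module.End k (Fin 3 → k) := Matrix.mulVecLin
  !![0, 0, 0; 0, 0, y; 0, 0, -1]

/-- The action of `S_1` on `P_3(z)`: `S_1v = 0`, `S_1(Tv) = 0`, `S_1(T²v) = -T²v`. -/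
def SP3 : Module.End k (Fin 3 → k) := Matrix.mulVecLin
  !![0, 0, 0; 0, 0, 0; 0, 0, -1]

/-- The action of `S_1` on `P̃_3(z)`: `S_1v = -v`, `S_1(Tv) = 0`, `S_1(T²v) = -T²v`. -/
def SPt3 : Module.End k (Fin 3 → k) := Matrix.mulVecLin
  !![-1, 0, 0; 0, 0, 0; 0, 0, -1]

/-- The action of `S_1` on `M_2(y)`: `S_1w = -w`, `S_1(Tw) = 0`. -/
def SM2 : Module.End k (Fin 2 → k) := Matrix.mulVecLin !![-1, 0; 0, 0]

/-- The action of `S_1` on `M̃_2(y)`: `S_1w = 0`, `S_1(Tw) = -Tw`. -/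
def SMt2 : Module.End k (Fin 2 → k) := Matrix.mulVecLin !![0, 0; 0, -1]

end

/-- The inverse of the action of `T`. -/
noncomputable def TinvAux (k : Type) [Field k] (z : k) : Module.End k (Fin 3 → k) :=
  Matrix.mulVecLin !![0, 1, 0; 0, 0, 1; z⁻¹, 0, 0]

/-- Lifting operators satisfying the relations to a representation. -/
theorem exists_rep_aux (k : Type) [Field k] {V : Type} [AddCommGroup V] [Module k V]
    (T Ti S Sb : Module.End k V) (h1 : T * Ti = 1) (h2 : Ti * T = 1)
    (h3 : (S + 1) * S = 0) (h4 : T ^ 3 * S = S * T ^ 3) (h5 : S * Sb * S = Sb * S * Sb)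
    (h6 : T * Sb = S * T) :
    ∃ ρ : Hk k →ₐ[k] Module.End k V, ρ (HeckeAlg.T k 0) = T ∧ ρ (HeckeAlg.S1 k 0) = S := by
  have hr : ∀ ⦃a b : FreeAlgebra k (Fin 4)⦄, HeckeRel k 0 a b →
      FreeAlgebra.lift k ![T, Ti, S, Sb] a = FreeAlgebra.lift k ![T, Ti, S, Sb] b := by
    intro a b hab
    cases hab with
    | TTinv => simpa using h1
    | TinvT => simpa using h2
    | quad => simpa using h3
    | T3S1 => simpa using h4
    | braid => simpa using h5
    | TS2 => simpa using h6
  refine ⟨RingQuot.liftAlgHom k ⟨FreeAlgebra.lift k ![T, Ti, S, Sb], hr⟩, ?_, ?_⟩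
  · simp [HeckeAlg.T, HeckeAlg.gen]
  · simp [HeckeAlg.S1, HeckeAlg.gen]

theorem Tmat3_apply_aux (k : Type) [Field k] (z : k) (x : Fin 3 → k) :
    Tmat3 k z x = ![z * x 2, x 0, x 1] := by
  ext i
  fin_cases i <;> simp [Tmat3, Matrix.mulVec, dotProduct, Fin.sum_univ_three]

theorem TinvAux_apply (k : Type) [Field k] (z : k) (x : Fin 3 → k) :
    TinvAux k z x = ![x 1, x 2, z⁻¹ * x 0] := by
  ext i
  fin_cases i <;> simp [TinvAux, Matrix.mulVec, dotProduct, Fin.sum_univ_three]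

theorem SP3_apply_aux (k : Type) [Field k] (x : Fin 3 → k) :
    SP3 k x = ![0, 0, - x 2] := by
  ext i
  fin_cases i <;> simp [SP3, Matrix.mulVec, dotProduct, Fin.sum_univ_three]

theorem SPt3_apply_aux (k : Type) [Field k] (x : Fin 3 → k) :
    SPt3 k x = ![- x 0, 0, - x 2] := by
  ext i
  fin_cases i <;> simp [SPt3, Matrix.mulVec, dotProduct, Fin.sum_univ_three]

/-- A `T`-stable subspace stable under projection to the third coordinate is trivial. -/
theorem simple_aux (k : Type) [Field k] (z : k) (hz : z ≠ 0) (W : Submodule k (Fin 3 → k))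
    (hT : ∀ x ∈ W, Tmat3 k z x ∈ W) (hS : ∀ x ∈ W, (![0, 0, x 2] : Fin 3 → k) ∈ W) :
    W = ⊥ ∨ W = ⊤ := by
  by_cases hW : ∀ x ∈ W, x 2 = 0
  · left
    rw [eq_bot_iff]
    intro x hx
    have a2 := hW x hx
    have a1 := hW _ (hT x hx)
    have a0 := hW _ (hT _ (hT x hx))
    simp [Tmat3_apply_aux] at a1 a0
    rw [Submodule.mem_bot]
    ext i
    fin_cases i <;> simp [a0, a1, a2]
  · right
    push Not at hW
    obtain ⟨x, hx, hx2⟩ := hW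
    have e2 : (![0, 0, 1] : Fin 3 → k) ∈ W := by
      have := W.smul_mem (x 2)⁻¹ (hS x hx)
      simpa [hx2] using this
    have e0 : (![1, 0, 0] : Fin 3 → k) ∈ W := by
      have := W.smul_mem z⁻¹ (hT _ e2)
      simpa [Tmat3_apply_aux, hz] using this
    have e1 : (![0, 1, 0] : Fin 3 → k) ∈ W := by
      simpa [Tmat3_apply_aux] using hT _ e0
    rw [eq_top_iff]
    intro y _
    have := W.add_mem (W.add_mem (W.smul_mem (y 0) e0) (W.smul_mem (y 1) e1))
      (W.smul_mem (y 2) e2)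
    convert this using 1
    ext i
    fin_cases i <;> simp

/-- For every `z ∈ k^×`, the formulas defining `P_3(z)` and `P̃_3(z)` endow
the respective `3`-dimensional `k`-vector spaces with `H_k`-module structures, and both
`H_k`-modules `P_3(z)` and `P̃_3(z)` are simple. -/
theorem statement17 (p : ℕ) [Fact p.Prime] (k : Type) [Field k] [IsAlgClosed k] [CharP k p]
    (z : kˣ) :
    (∃ ρ : Hk k →ₐ[k] Module.End k (Fin 3 → k),
      ρ (HeckeAlg.T k 0) = Tmat3 k z ∧ ρ (HeckeAlg.S1 k 0) = SP3 k ∧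
      (∀ W : Submodule k (Fin 3 → k), (∀ a : Hk k, ∀ x ∈ W, ρ a x ∈ W) → W = ⊥ ∨ W = ⊤)) ∧
    (∃ ρ : Hk k →ₐ[k] Module.End k (Fin 3 → k),
      ρ (HeckeAlg.T k 0) = Tmat3 k z ∧ ρ (HeckeAlg.S1 k 0) = SPt3 k ∧
      (∀ W : Submodule k (Fin 3 → k), (∀ a : Hk k, ∀ x ∈ W, ρ a x ∈ W) → W = ⊥ ∨ W = ⊤)) := by
  have hz : (z : k) ≠ 0 := z.ne_zero
  constructor
  · obtain ⟨ρ, hT, hS⟩ := exists_rep_aux k (Tmat3 k z) (TinvAux k z) (SP3 k)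
      (TinvAux k z * SP3 k * Tmat3 k z)
      (by
        refine LinearMap.ext fun x => funext fun i => ?_
        fin_cases i <;> simp [Tmat3_apply_aux, TinvAux_apply, hz])
      (by
        refine LinearMap.ext fun x => funext fun i => ?_
        fin_cases i <;> simp [Tmat3_apply_aux, TinvAux_apply, hz])
      (by
        refine LinearMap.ext fun x => funext fun i => ?_
        fin_cases i <;> simp [SP3_apply_aux])
      (by
        refine LinearMap.ext fun x => funext fun i => ?_
        fin_cases i <;> simp [pow_succ, Tmat3_apply_aux, SP3_apply_aux])
      (by
        refine LinearMap.ext fun x => funext fun i => ?_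
        fin_cases i <;> simp [Tmat3_apply_aux, TinvAux_apply, SP3_apply_aux])
      (by
        refine LinearMap.ext fun x => funext fun i => ?_
        fin_cases i <;> simp [Tmat3_apply_aux, TinvAux_apply, SP3_apply_aux])
    refine ⟨ρ, hT, hS, fun W hW => simple_aux k z hz W (fun x hx => hT ▸ hW _ x hx) ?_⟩
    intro x hx
    have h := W.neg_mem (hW (HeckeAlg.S1 k 0) x hx)
    rw [hS, SP3_apply_aux] at h
    simpa using h
  · obtain ⟨ρ, hT, hS⟩ := exists_rep_aux k (Tmat3 k z) (TinvAux k z) (SPt3 k)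
      (TinvAux k z * SPt3 k * Tmat3 k z)
      (by
        refine LinearMap.ext fun x => funext fun i => ?_
        fin_cases i <;> simp [Tmat3_apply_aux, TinvAux_apply, hz])
      (by
        refine LinearMap.ext fun x => funext fun i => ?_
        fin_cases i <;> simp [Tmat3_apply_aux, TinvAux_apply, hz])
      (by
        refine LinearMap.ext fun x => funext fun i => ?_
        fin_cases i <;> simp [SPt3_apply_aux])
      (by
        refine LinearMap.ext fun x => funext fun i => ?_
        fin_cases i <;> simp [pow_succ, Tmat3_apply_aux, SPt3_apply_aux])
      (by
        refine LinearMap.ext fun x => funext fun i => ?_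
        fin_cases i <;> simp [Tmat3_apply_aux, TinvAux_apply, SPt3_apply_aux, hz])
      (by
        refine LinearMap.ext fun x => funext fun i => ?_
        fin_cases i <;> simp [Tmat3_apply_aux, TinvAux_apply, SPt3_apply_aux, hz])
    have hTW : ∀ (W : Submodule k (Fin 3 → k)), (∀ a : Hk k, ∀ x ∈ W, ρ a x ∈ W) →
        ∀ x ∈ W, Tmat3 k z x ∈ W := fun W hW x hx => hT ▸ hW _ x hx
    refine ⟨ρ, hT, hS, fun W hW => simple_aux k z hz W (hTW W hW) ?_⟩
    intro x hx
    -- move the third coordinate to the second by `T²`, project by `S₁ + 1`, move back by `T`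
    have hy := hTW W hW _ (hTW W hW x hx)
    have h1 := hW (HeckeAlg.S1 k 0) _ hy
    rw [hS] at h1
    have h2 := W.smul_mem (z : k)⁻¹ (hTW W hW _ (W.add_mem h1 hy))
    simpa [Tmat3_apply_aux, SPt3_apply_aux, hz] using h2
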